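/- Let R = P_k(Ē) be the path algebra of the inverse quiver of a finite quiver E. The category of left R-modules of finite k-dimension coincides with the category of finite-length objects in the abelian category fp(R) of finitely presented left R-modules. In particular: every finite-dimensional left R-module is finitely presented; and every simple object of fp(R) (a finitely presented module with no finitely presented proper nonzero submodules arising in fp(R)) is finite-dimensional over k. -/

import Mathlib

namespace LPA

/-- A finite quiver: finite sets of vertices and arrows with source and target maps. -/
structure FinQuiver : Type 1 where
  V : Type
  A : Type
  [fintypeV : Fintype V]
  [decEqV : DecidableEq V]
  [fintypeA : Fintype A]
  [decEqA : DecidableEq A]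
  src : A → V
  tgt : A → V

attribute [instance] FinQuiver.fintypeV FinQuiver.decEqV FinQuiver.fintypeA FinQuiver.decEqA

/-- The inverse quiver: all arrows reversed. -/
def FinQuiver.rev (Q : FinQuiver) : FinQuiver where
  V := Q.V
  A := Q.A
  fintypeV := Q.fintypeV
  decEqV := Q.decEqV
  fintypeA := Q.fintypeA
  decEqA := Q.decEqA
  src := Q.tgt
  tgt := Q.src

/-- Generators of the path algebra: a trivial path `p v` for each vertex and an arrow `e` for
each arrow. -/
inductive PathGen (Q : FinQuiver) : Type
  | vertex (v : Q.V) : PathGen Q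
  | edge (e : Q.A) : PathGen Q

/-- Defining relations of the path algebra: the trivial paths are pairwise orthogonal
idempotents summing to `1`, and `p (src e) * e = e = e * p (tgt e)`. -/
inductive PathRel (k : Type) [CommRing k] (Q : FinQuiver) :
    FreeAlgebra k (PathGen Q) → FreeAlgebra k (PathGen Q) → Prop
  | vertex_mul_self (v : Q.V) :
      PathRel k Q (FreeAlgebra.ι k (PathGen.vertex v) * FreeAlgebra.ι k (PathGen.vertex v))
        (FreeAlgebra.ι k (PathGen.vertex v))
  | vertex_mul_ne (v w : Q.V) (h : v ≠ w) :
      PathRel k Q (FreeAlgebra.ι k (PathGen.vertex v) * FreeAlgebra.ι k (PathGen.vertex w)) 0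
  | sum_vertex :
      PathRel k Q (∑ v : Q.V, FreeAlgebra.ι k (PathGen.vertex v)) 1
  | src_mul (e : Q.A) :
      PathRel k Q
        (FreeAlgebra.ι k (PathGen.vertex (Q.src e)) * FreeAlgebra.ι k (PathGen.edge e))
        (FreeAlgebra.ι k (PathGen.edge e))
  | mul_tgt (e : Q.A) :
      PathRel k Q
        (FreeAlgebra.ι k (PathGen.edge e) * FreeAlgebra.ι k (PathGen.vertex (Q.tgt e)))
        (FreeAlgebra.ι k (PathGen.edge e))

/-- The path algebra `P_k(Q)` of a finite quiver `Q`, presented by generators and relations. -/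
def PathAlg (k : Type) [CommRing k] (Q : FinQuiver) : Type :=
  RingQuot (PathRel k Q)

variable (k : Type) [CommRing k] (Q : FinQuiver)

noncomputable instance : Ring (PathAlg k Q) :=
  inferInstanceAs (Ring (RingQuot (PathRel k Q)))

noncomputable instance : Algebra k (PathAlg k Q) :=
  inferInstanceAs (Algebra k (RingQuot (PathRel k Q)))

/-- The quotient map from the free algebra onto the path algebra. -/
noncomputable def PathAlg.mk : FreeAlgebra k (PathGen Q) →ₐ[k] PathAlg k Q :=
  RingQuot.mkAlgHom k (PathRel k Q)

/-- The trivial path (vertex idempotent) `p v` in the path algebra. -/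
noncomputable def PathAlg.p (v : Q.V) : PathAlg k Q :=
  PathAlg.mk k Q (FreeAlgebra.ι k (PathGen.vertex v))

/-- The arrow `e` in the path algebra. -/
noncomputable def PathAlg.arrow (e : Q.A) : PathAlg k Q :=
  PathAlg.mk k Q (FreeAlgebra.ι k (PathGen.edge e))

theorem PathAlg.mk_rel {x y : FreeAlgebra k (PathGen Q)} (h : PathRel k Q x y) :
    PathAlg.mk k Q x = PathAlg.mk k Q y :=
  RingQuot.mkAlgHom_rel k h

theorem PathAlg.p_mul_self (v : Q.V) : PathAlg.p k Q v * PathAlg.p k Q v = PathAlg.p k Q v := by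
  have h := PathAlg.mk_rel k Q (PathRel.vertex_mul_self v)
  simpa [map_mul, PathAlg.p] using h

theorem PathAlg.p_mul_ne (v w : Q.V) (hvw : v ≠ w) :
    PathAlg.p k Q v * PathAlg.p k Q w = 0 := by
  have h := PathAlg.mk_rel k Q (PathRel.vertex_mul_ne v w hvw)
  simpa [map_mul, PathAlg.p] using h

theorem PathAlg.sum_p : (∑ v : Q.V, PathAlg.p k Q v) = 1 := by
  have h := PathAlg.mk_rel k Q (PathRel.sum_vertex)
  simpa [map_sum, PathAlg.p] using h

theorem PathAlg.arrow_mul_tgt (e : Q.A) :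
    PathAlg.arrow k Q e * PathAlg.p k Q (Q.tgt e) = PathAlg.arrow k Q e := by
  have h := PathAlg.mk_rel k Q (PathRel.mul_tgt e)
  simpa [map_mul, PathAlg.p, PathAlg.arrow] using h

theorem PathAlg.src_mul_arrow (e : Q.A) :
    PathAlg.p k Q (Q.src e) * PathAlg.arrow k Q e = PathAlg.arrow k Q e := by
  have h := PathAlg.mk_rel k Q (PathRel.src_mul e)
  simpa [map_mul, PathAlg.p, PathAlg.arrow] using h

/-- The set of vertices `{p v | v ∈ Q.V}` of the path algebra, as a finite set. -/
noncomputable def vertexFinset : Finset (PathAlg k Q) :=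
  letI := Classical.decEq (PathAlg k Q)
  Finset.univ.image (PathAlg.p k Q)

end LPA

namespace LPA

/-- `X` is a simple object of the category `fp(R)` of finitely presented modules: it is
nontrivial and has no finitely presented submodules other than `⊥` and `⊤`. -/
def FpSimple (R X : Type) [Ring R] [AddCommGroup X] [Module R X] : Prop :=
  Nontrivial X ∧
    ∀ N : Submodule R X, Module.FinitePresentation R ↥N → N = ⊥ ∨ N = ⊤

/-- A composition series for `M` inside the abelian category `fp(R)`: a chain of finitely
presented submodules from `⊥` to `⊤` whose factors are simple objects of `fp(R)`. -/
def IsFpCompSeries {R M : Type} [Ring R] [AddCommGroup M] [Module R M] (ℓ : ℕ)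
    (c : Fin (ℓ + 1) → Submodule R M) : Prop :=
  c 0 = ⊥ ∧ c (Fin.last ℓ) = ⊤ ∧ (∀ i : Fin (ℓ + 1), Module.FinitePresentation R ↥(c i)) ∧
    ∀ i : Fin ℓ, c i.castSucc < c i.succ ∧
      FpSimple R (↥(c i.succ) ⧸ Submodule.comap (c i.succ).subtype (c i.castSucc))

end LPA

/-!
Let `R` be the path algebra. If `U` is finite-dimensional, then the kernel of `R ⊗ U → U` is
generated by the elements `g ⊗ u - 1 ⊗ g u` with `g` a vertex or an arrow and `u` in a basis of `U`,
so `U` is finitely presented.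

The arrows of a quiver can act by arbitrary linear maps between the vertex spaces. Hence an
extension of modules `0 → L → F → U → 0` lifts along any surjection `N → L`; for `F` projective this
splits `N → L`, so submodules of projective modules are projective. It follows that finitely
generated submodules of finitely presented modules are finitely presented, and that the simple
objects of `fp(R)` are simple modules.

For the same reason any large finite-dimensional subspace `U ⊆ M` stable under the vertices becomes
a module on cutting off the arrows that leave it. If `M` is finitely presented and `U` contains all
vectors needed to evaluate the finitely many relations, then the inclusion of the generators extends
to a module map `M → U`, and it may be made nonzero at a given `x ≠ 0`. Thus the finite-dimensional
quotients of `M` separate its points, and a simple `M` is finite-dimensional.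
-/

namespace LPA

open Filter TensorProduct

section FiniteType

variable {k R U : Type*} [CommRing k] [Ring R] [Algebra k R] [AddCommGroup U] [Module k U]
  [Module R U] [IsScalarTower k R U]

variable (k R U) in
/-- The action map `R ⊗ U → U`, `r ⊗ u ↦ r u`, as an `R`-linear map. It is Mathlib's
`LinearMap.liftBaseChange` of the identity, for `R` not necessarily commutative. -/
noncomputable def actionMap : R ⊗[k] U →ₗ[R] U :=
  AlgebraTensorModule.lift (LinearMap.toSpanSingleton R (U →ₗ[k] U) LinearMap.id)

@[simp]
theorem actionMap_tmul (r : R) (u : U) : actionMap k R U (r ⊗ₜ u) = r • u := by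
  simp [actionMap]

theorem actionMap_surjective : Function.Surjective (actionMap k R U) :=
  fun u ↦ ⟨1 ⊗ₜ u, by simp⟩

theorem tmul_sub_one_tmul_smul_mem {S : Set R} (hS : Algebra.adjoin k S = ⊤)
    {K : Submodule R (R ⊗[k] U)} (hK : ∀ g ∈ S, ∀ u : U, g ⊗ₜ u - 1 ⊗ₜ (g • u) ∈ K)
    (r : R) (u : U) : r ⊗ₜ u - 1 ⊗ₜ (r • u) ∈ K := by
  have hr : r ∈ Algebra.adjoin k S := hS ▸ Algebra.mem_top
  induction hr using Algebra.adjoin_induction generalizing u with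
  | mem g hg => exact hK g hg u
  | algebraMap c => simp [Algebra.algebraMap_eq_smul_one, smul_tmul]
  | add a b _ _ iha ihb =>
    convert K.add_mem (iha u) (ihb u) using 1
    rw [add_tmul, add_smul, tmul_add]
    abel
  | mul a b _ _ iha ihb =>
    convert K.add_mem (K.smul_mem a (ihb u)) (iha (b • u)) using 1
    rw [smul_sub, smul_tmul', smul_tmul', smul_eq_mul, smul_eq_mul, mul_one, mul_smul,
      sub_add_sub_cancel]

theorem ker_actionMap_eq_span {S : Set R} (hS : Algebra.adjoin k S = ⊤) {T : Set U}
    (hT : Submodule.span k T = ⊤) :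
    LinearMap.ker (actionMap k R U) =
      Submodule.span R (Set.image2 (fun g u ↦ g ⊗ₜ[k] u - 1 ⊗ₜ (g • u)) S T) := by
  set K := Submodule.span R (Set.image2 (fun g u ↦ g ⊗ₜ[k] u - 1 ⊗ₜ (g • u)) S T)
  have hK : ∀ g ∈ S, ∀ u : U, g ⊗ₜ u - 1 ⊗ₜ (g • u) ∈ K := fun g hg u ↦ by
    have hu : u ∈ Submodule.span k T := hT ▸ Submodule.mem_top
    let D : U →ₗ[k] R ⊗[k] U := TensorProduct.mk k R U g -
      TensorProduct.mk k R U 1 ∘ₗ Algebra.lsmul k k U g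
    have hTK : Submodule.span k T ≤ (K.restrictScalars k).comap D :=
      Submodule.span_le.mpr fun t ht ↦ Submodule.subset_span (Set.mem_image2_of_mem hg ht)
    exact hTK hu
  have hsub (t : R ⊗[k] U) : t - 1 ⊗ₜ actionMap k R U t ∈ K := by
    induction t with
    | zero => simp
    | tmul r u => simpa using tmul_sub_one_tmul_smul_mem hS hK r u
    | add a b iha ihb =>
      convert K.add_mem iha ihb using 1
      rw [map_add, tmul_add]
      abel
  refine le_antisymm (fun t ht ↦ ?_) (Submodule.span_le.mpr ?_)
  · simpa [LinearMap.mem_ker.mp ht] using hsub t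
  · rintro _ ⟨g, -, u, -, rfl⟩
    simp

variable (k R U) in
theorem finitePresentation_of_finite [Algebra.FiniteType k R] [Module.Finite k U]
    [Module.Projective k U] : Module.FinitePresentation R U := by
  obtain ⟨S, hS⟩ := ‹Algebra.FiniteType k R›.out
  obtain ⟨T, hT⟩ := ‹Module.Finite k U›.fg_top
  have : Module.FinitePresentation R (R ⊗[k] U) := Module.finitePresentation_of_projective _ _
  refine Module.finitePresentation_of_surjective (actionMap k R U) actionMap_surjective ?_
  rw [ker_actionMap_eq_span hS hT]
  exact Submodule.fg_span (S.finite_toSet.image2 _ T.finite_toSet)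

end FiniteType

section Coherence

/-- A ring is left semihereditary if its finitely generated left ideals are projective. We use the
equivalent condition that finitely generated submodules of the free modules `R ^ n` are
projective. -/
def IsLeftSemihereditary (R : Type*) [Ring R] : Prop :=
  ∀ (n : ℕ) (L : Submodule R (Fin n → R)), L.FG → Module.Projective R L

theorem IsLeftSemihereditary.finitePresentation_of_fg {R M : Type*} [Ring R] [AddCommGroup M]
    [Module R M] [Module.FinitePresentation R M] (hR : IsLeftSemihereditary R)
    {N : Submodule R M} (hN : N.FG) : Module.FinitePresentation R N := by
  obtain ⟨n, f, hf⟩ := Module.Finite.exists_fin' R M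
  have hker : (LinearMap.ker f).FG := Module.FinitePresentation.fg_ker f hf
  have hker_le : LinearMap.ker f ≤ N.comap f := Submodule.comap_mono bot_le
  have hL : (N.comap f).FG := by
    refine Submodule.fg_of_fg_map_of_fg_inf_ker f ?_ ?_
    · rwa [Submodule.map_comap_eq_of_surjective hf]
    · rwa [inf_eq_right.mpr hker_le]
  have : Module.Finite R (N.comap f) := Module.Finite.iff_fg.mpr hL
  have : Module.Projective R (N.comap f) := hR n _ hL
  have : Module.FinitePresentation R (N.comap f) := Module.finitePresentation_of_projective _ _
  refine Module.finitePresentation_of_surjective (f.submoduleComap N)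
    (LinearMap.submoduleComap_surjective_of_surjective f N hf) ?_
  refine Submodule.fg_of_fg_map_injective (N.comap f).subtype (Submodule.subtype_injective _) ?_
  convert hker
  ext x
  constructor
  · rintro ⟨y, hy, rfl⟩
    exact congrArg Subtype.val hy
  · exact fun hx ↦ ⟨⟨x, hker_le hx⟩, Subtype.ext hx, rfl⟩

theorem fpSimple_of_isSimpleModule {R M : Type} [Ring R] [AddCommGroup M] [Module R M]
    [IsSimpleModule R M] : FpSimple R M :=
  ⟨IsSimpleModule.nontrivial R M, fun N _ ↦ eq_bot_or_eq_top N⟩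

theorem FpSimple.isSimpleModule {R M : Type} [Ring R] [AddCommGroup M] [Module R M]
    [Module.FinitePresentation R M] (hR : IsLeftSemihereditary R) (hM : FpSimple R M) :
    IsSimpleModule R M := by
  obtain ⟨_, hbot_or_top⟩ := hM
  refine isSimpleModule_iff_toSpanSingleton_surjective.mpr ⟨‹_›, fun x hx ↦ ?_⟩
  have hfp : Module.FinitePresentation R (Submodule.span R {x}) :=
    hR.finitePresentation_of_fg (Submodule.fg_span_singleton x)
  have htop : Submodule.span R {x} = ⊤ :=
    (hbot_or_top _ hfp).resolve_left (mt Submodule.span_singleton_eq_bot.mp hx)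
  rwa [← LinearMap.range_eq_top, LinearMap.range_toSpanSingleton]

end Coherence

theorem exists_section_of_extension {R N E F : Type*} [Ring R] [AddCommGroup N] [Module R N]
    [AddCommGroup E] [Module R E] [AddCommGroup F] [Module R F] [Module.Projective R F]
    {L : Submodule R F} {g : N →ₗ[R] L} {i : N →ₗ[R] E} {π : E →ₗ[R] F}
    (hi : Function.Injective i) (hπ : Function.Surjective π) (hg : π ∘ₗ i = L.subtype ∘ₗ g)
    (hL : L.comap π ≤ LinearMap.range i) : ∃ h : L →ₗ[R] N, g ∘ₗ h = LinearMap.id := by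
  obtain ⟨s, hs⟩ := Module.projective_lifting_property π LinearMap.id hπ
  have hπs (x : F) : π (s x) = x := LinearMap.congr_fun hs x
  have hsL (x : L) : s x ∈ LinearMap.range i := hL <| by simp [hπs]
  let h : L →ₗ[R] N := (LinearEquiv.ofInjective i hi).symm ∘ₗ
    (s ∘ₗ L.subtype).codRestrict (LinearMap.range i) hsL
  have hih (x : L) : i (h x) = s x :=
    congrArg Subtype.val ((LinearEquiv.ofInjective i hi).apply_symm_apply ⟨s x, hsL x⟩)
  refine ⟨h, LinearMap.ext fun x ↦ Subtype.ext ?_⟩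
  calc (g (h x) : F) = π (i (h x)) := (LinearMap.congr_fun hg (h x)).symm
    _ = x := by rw [hih, hπs]

section Representations

/-- The vector space `X` with the `R`-module structure given by a representation
`ρ : R → End_k X`. It is a type synonym, since `X` may carry another `R`-action. -/
def AsModule {k R X : Type*} [CommRing k] [Ring R] [Algebra k R] [AddCommGroup X] [Module k X]
    (_ρ : R →ₐ[k] Module.End k X) : Type _ :=
  X

namespace AsModule

variable {k R X : Type*} [CommRing k] [Ring R] [Algebra k R] [AddCommGroup X] [Module k X]
  (ρ : R →ₐ[k] Module.End k X)

instance : AddCommGroup (AsModule ρ) := inferInstanceAs (AddCommGroup X)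

instance : Module k (AsModule ρ) := inferInstanceAs (Module k X)

instance : Module R (AsModule ρ) := Module.compHom X ρ.toRingHom

/-- The identity map from `X` to `AsModule ρ`. -/
def of : X ≃ₗ[k] AsModule ρ :=
  LinearEquiv.refl k X

theorem smul_of (r : R) (x : X) : r • of ρ x = of ρ (ρ r x) := rfl

theorem of_symm_smul (r : R) (x : AsModule ρ) : (of ρ).symm (r • x) = ρ r ((of ρ).symm x) := rfl

instance : IsScalarTower k R (AsModule ρ) :=
  ⟨fun c r x ↦ by
    obtain ⟨x, rfl⟩ := (of ρ).surjective x
    simp only [smul_of, map_smul, LinearMap.smul_apply]⟩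

end AsModule

end Representations

namespace PathAlg

section Generators

variable {k : Type} [CommRing k] {Q : FinQuiver}

instance : Finite (PathGen Q) :=
  Finite.of_surjective (Sum.elim PathGen.vertex PathGen.edge) <| by
    rintro (v | e)
    exacts [⟨.inl v, rfl⟩, ⟨.inr e, rfl⟩]

instance : Algebra.FiniteType k (PathAlg k Q) :=
  .of_surjective (mk k Q) (RingQuot.mkAlgHom_surjective k (PathRel k Q))

@[elab_as_elim]
theorem induction {C : PathAlg k Q → Prop} (algebraMap : ∀ c, C (algebraMap k (PathAlg k Q) c))
    (vertex : ∀ v, C (p k Q v)) (arrow : ∀ e, C (arrow k Q e))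
    (mul : ∀ a b, C a → C b → C (a * b)) (add : ∀ a b, C a → C b → C (a + b))
    (r : PathAlg k Q) : C r := by
  obtain ⟨x, rfl⟩ : ∃ x, mk k Q x = r := RingQuot.mkAlgHom_surjective k (PathRel k Q) r
  induction x using FreeAlgebra.induction with
  | grade0 c => rw [AlgHom.commutes]; exact algebraMap c
  | grade1 g => cases g with
    | vertex v => exact vertex v
    | edge e => exact arrow e
  | mul a b iha ihb => rw [map_mul]; exact mul _ _ iha ihb
  | add a b iha ihb => rw [map_add]; exact add _ _ iha ihb

theorem exists_algHom {B : Type*} [Ring B] [Algebra k B] (P : Q.V → B) (W : Q.A → B)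
    (vertex_mul_self : ∀ v, P v * P v = P v) (vertex_mul_ne : ∀ v w, v ≠ w → P v * P w = 0)
    (sum_vertex : ∑ v, P v = 1) (src_mul : ∀ e, P (Q.src e) * W e = W e)
    (mul_tgt : ∀ e, W e * P (Q.tgt e) = W e) :
    ∃ Φ : PathAlg k Q →ₐ[k] B, (∀ v, Φ (p k Q v) = P v) ∧ ∀ e, Φ (arrow k Q e) = W e := by
  let f : FreeAlgebra k (PathGen Q) →ₐ[k] B := FreeAlgebra.lift k
    fun | .vertex v => P v | .edge e => W e
  have hf : ∀ ⦃x y⦄, PathRel k Q x y → f x = f y := by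
    rintro _ _ (v | ⟨v, w, h⟩ | _ | e | e)
    · simp [f, vertex_mul_self]
    · simp [f, vertex_mul_ne v w h]
    · simp [f, sum_vertex]
    · simp [f, src_mul]
    · simp [f, mul_tgt]
  refine ⟨RingQuot.liftAlgHom k ⟨f, hf⟩, fun v ↦ ?_, fun e ↦ ?_⟩
  · exact (RingQuot.liftAlgHom_mkAlgHom_apply k f hf _).trans (by simp [f])
  · exact (RingQuot.liftAlgHom_mkAlgHom_apply k f hf _).trans (by simp [f])

theorem sum_p_smul {X : Type*} [AddCommGroup X] [Module (PathAlg k Q) X] (x : X) :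
    ∑ v, p k Q v • x = x := by
  rw [← Finset.sum_smul, sum_p, one_smul]

variable {X Y : Type*} [AddCommGroup X] [Module k X] [Module (PathAlg k Q) X]
  [IsScalarTower k (PathAlg k Q) X] [AddCommGroup Y] [Module k Y] [Module (PathAlg k Q) Y]
  [IsScalarTower k (PathAlg k Q) Y]

/-- A `k`-linear map which commutes with the vertices and the arrows, as a map of modules over the
path algebra. -/
def linearMapOfCommutes (f : X →ₗ[k] Y) (vertex : ∀ v x, f (p k Q v • x) = p k Q v • f x)
    (arrow : ∀ e x, f (arrow k Q e • x) = arrow k Q e • f x) : X →ₗ[PathAlg k Q] Y where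
  toFun := f
  map_add' := map_add f
  map_smul' r x := by
    induction r using induction generalizing x with
    | algebraMap c => simp [Algebra.algebraMap_eq_smul_one]
    | vertex v => exact vertex v x
    | arrow e => exact arrow e x
    | mul a b iha ihb => simp_all [mul_smul]
    | add a b iha ihb => simp_all [add_smul]

theorem exists_twisted_action (d : Q.A → Y →ₗ[k] X)
    (src_smul : ∀ e u, p k Q (Q.src e) • d e u = d e u)
    (tgt_smul : ∀ e u, d e (p k Q (Q.tgt e) • u) = d e u) :
    ∃ ρ : PathAlg k Q →ₐ[k] Module.End k (X × Y), (∀ v x, ρ (p k Q v) x = p k Q v • x) ∧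
      ∀ e x, ρ (arrow k Q e) x = arrow k Q e • x + (d e x.2, 0) := by
  obtain ⟨ρ, hvertex, harrow⟩ := exists_algHom (k := k) (Q := Q) (B := Module.End k (X × Y))
    (fun v ↦ Algebra.lsmul k k (X × Y) (p k Q v))
    (fun e ↦ Algebra.lsmul k k (X × Y) (arrow k Q e) +
      LinearMap.inl k X Y ∘ₗ d e ∘ₗ LinearMap.snd k X Y)
    (fun v ↦ by rw [← map_mul, p_mul_self])
    (fun v w h ↦ by rw [← map_mul, p_mul_ne k Q v w h, map_zero])
    (by rw [← map_sum, sum_p, map_one])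
    (fun e ↦ by
      rw [mul_add, ← map_mul, src_mul_arrow]
      congr 1
      ext x <;> simp [src_smul])
    (fun e ↦ by
      rw [add_mul, ← map_mul, arrow_mul_tgt]
      congr 1
      ext x <;> simp [tgt_smul])
  exact ⟨ρ, fun v x ↦ by rw [hvertex]; rfl, fun e x ↦ by rw [harrow]; rfl⟩

end Generators

section Hereditary

variable {k : Type} [Field k] {Q : FinQuiver} {N U F : Type*}
  [AddCommGroup N] [Module k N] [Module (PathAlg k Q) N] [IsScalarTower k (PathAlg k Q) N]
  [AddCommGroup U] [Module k U] [Module (PathAlg k Q) U] [IsScalarTower k (PathAlg k Q) U]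
  [AddCommGroup F] [Module k F] [Module (PathAlg k Q) F] [IsScalarTower k (PathAlg k Q) F]

theorem exists_vertex_equivariant_section {f : F →ₗ[PathAlg k Q] U} (hf : Function.Surjective f) :
    ∃ σ : U →ₗ[k] F, (∀ u, f (σ u) = u) ∧ ∀ v u, σ (p k Q v • u) = p k Q v • σ u := by
  obtain ⟨τ, hτ⟩ := (f.restrictScalars k).exists_rightInverse_of_surjective
    (LinearMap.range_eq_top.mpr hf)
  have hfτ (u : U) : f (τ u) = u := LinearMap.congr_fun hτ u
  let σ : U →ₗ[k] F :=
    ∑ v, Algebra.lsmul k k F (p k Q v) ∘ₗ τ ∘ₗ Algebra.lsmul k k U (p k Q v)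
  have hσ (u : U) : σ u = ∑ v, p k Q v • τ (p k Q v • u) := by simp [σ]
  refine ⟨σ, fun u ↦ ?_, fun v u ↦ ?_⟩
  · simp only [hσ, map_sum, map_smul, hfτ, ← mul_smul, p_mul_self, sum_p_smul]
  · rw [hσ, hσ, Finset.smul_sum]
    refine Finset.sum_congr rfl fun w _ ↦ ?_
    obtain rfl | hvw := eq_or_ne v w
    · simp only [← mul_smul, p_mul_self]
    · simp only [← mul_smul, p_mul_ne k Q v w hvw, p_mul_ne k Q w v hvw.symm, zero_smul, map_zero,
        smul_zero]

theorem exists_section_with_lifted_cocycle {f : F →ₗ[PathAlg k Q] U} (hf : Function.Surjective f)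
    {L : Submodule (PathAlg k Q) F} (hL : LinearMap.ker f = L) {g : N →ₗ[PathAlg k Q] L}
    (hg : Function.Surjective g) :
    ∃ (σ : U →ₗ[k] F) (d : Q.A → U →ₗ[k] N),
      (∀ u, f (σ u) = u) ∧ (∀ v u, σ (p k Q v • u) = p k Q v • σ u) ∧
      (∀ e u, (g (d e u) : F) = arrow k Q e • σ u - σ (arrow k Q e • u)) ∧
      (∀ e u, p k Q (Q.src e) • d e u = d e u) ∧ ∀ e u, d e (p k Q (Q.tgt e) • u) = d e u := by
  obtain ⟨σ, hfσ, hσp⟩ := exists_vertex_equivariant_section hf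
  obtain ⟨τ, hgτ, hτp⟩ := exists_vertex_equivariant_section hg
  let c (e : Q.A) : U →ₗ[k] F :=
    Algebra.lsmul k k F (arrow k Q e) ∘ₗ σ - σ ∘ₗ Algebra.lsmul k k U (arrow k Q e)
  have hc (e u) : c e u = arrow k Q e • σ u - σ (arrow k Q e • u) := rfl
  have hcL (e u) : c e u ∈ L := by
    rw [← hL, LinearMap.mem_ker, hc, map_sub, map_smul, hfσ, hfσ, sub_self]
  let c' (e : Q.A) : U →ₗ[k] L := (c e).codRestrict (L.restrictScalars k) (hcL e)
  refine ⟨σ, fun e ↦ τ ∘ₗ c' e, hfσ, hσp, fun e u ↦ congrArg Subtype.val (hgτ _), fun e u ↦ ?_,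
    fun e u ↦ ?_⟩
  · have hsrc : p k Q (Q.src e) • c' e u = c' e u := Subtype.ext <|
      show p k Q (Q.src e) • c e u = c e u by
        rw [hc, smul_sub, ← hσp, ← mul_smul, ← mul_smul, src_mul_arrow]
    exact (hτp _ _).symm.trans (congrArg τ hsrc)
  · have htgt : c' e (p k Q (Q.tgt e) • u) = c' e u := Subtype.ext <|
      show c e (p k Q (Q.tgt e) • u) = c e u by
        rw [hc, hc, hσp, ← mul_smul, ← mul_smul, arrow_mul_tgt]
    exact congrArg τ htgt

-- Yoneda's form of `Ext² (U, ker g) = 0`: the extension `F` of `U` by `L` is the push-forward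
-- along `g` of an extension of `U` by `N`.
theorem exists_extension_lift {f : F →ₗ[PathAlg k Q] U} (hf : Function.Surjective f)
    {L : Submodule (PathAlg k Q) F} (hL : LinearMap.ker f = L) {g : N →ₗ[PathAlg k Q] L}
    (hg : Function.Surjective g) :
    ∃ (ρ : PathAlg k Q →ₐ[k] Module.End k (N × U))
      (i : N →ₗ[PathAlg k Q] AsModule ρ) (π : AsModule ρ →ₗ[PathAlg k Q] F),
      Function.Injective i ∧ Function.Surjective π ∧ π ∘ₗ i = L.subtype ∘ₗ g ∧
        L.comap π ≤ LinearMap.range i := by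
  obtain ⟨σ, d, hfσ, hσp, hgd, src_smul, tgt_smul⟩ := exists_section_with_lifted_cocycle hf hL hg
  obtain ⟨ρ, hρp, hρe⟩ := exists_twisted_action d src_smul tgt_smul
  let i : N →ₗ[PathAlg k Q] AsModule ρ :=
    linearMapOfCommutes ((AsModule.of ρ).toLinearMap ∘ₗ LinearMap.inl k N U)
      (fun v n ↦ by simp [AsModule.smul_of, hρp]) (fun e n ↦ by simp [AsModule.smul_of, hρe])
  let π : AsModule ρ →ₗ[PathAlg k Q] F :=
    linearMapOfCommutes
      (((L.subtype ∘ₗ g).restrictScalars k).coprod σ ∘ₗ (AsModule.of ρ).symm.toLinearMap)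
      (fun v x ↦ by simp [AsModule.of_symm_smul, hρp, hσp])
      (fun e x ↦ by simp [AsModule.of_symm_smul, hρe, hgd, add_assoc])
  have hi (n : N) : i n = AsModule.of ρ (n, 0) := rfl
  have hπ (x : N × U) : π (AsModule.of ρ x) = g x.1 + σ x.2 := rfl
  refine ⟨ρ, i, π, (AsModule.of ρ).injective.comp LinearMap.inl_injective, fun y ↦ ?_,
    LinearMap.ext fun n ↦ ?_, fun x hx ↦ ?_⟩
  · have hy : y - σ (f y) ∈ L := by rw [← hL, LinearMap.mem_ker, map_sub, hfσ, sub_self]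
    obtain ⟨n, hn⟩ := hg ⟨_, hy⟩
    exact ⟨AsModule.of ρ (n, f y), by rw [hπ, hn, sub_add_cancel]⟩
  · simp [hi, hπ]
  · obtain ⟨⟨n, u⟩, rfl⟩ := (AsModule.of ρ).surjective x
    have hσu : σ u ∈ L := (L.add_mem_iff_right (g n).2).mp (hπ (n, u) ▸ hx)
    obtain rfl : u = 0 := by rwa [← hL, LinearMap.mem_ker, hfσ] at hσu
    exact ⟨n, hi n⟩

theorem projective_submodule [Module.Projective (PathAlg k Q) F]
    (L : Submodule (PathAlg k Q) F) : Module.Projective (PathAlg k Q) L := by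
  refine Module.Projective.of_lifting_property'' fun g hg ↦ ?_
  obtain ⟨ρ, i, π, hi, hπ, hgi, hL⟩ := exists_extension_lift L.mkQ_surjective L.ker_mkQ hg
  exact exists_section_of_extension hi hπ hgi hL

theorem isLeftSemihereditary : IsLeftSemihereditary (PathAlg k Q) :=
  fun _ L _ ↦ projective_submodule L

end Hereditary
section Truncations

variable {k : Type} [CommRing k] {Q : FinQuiver} {M : Type*} [AddCommGroup M] [Module k M]
  [Module (PathAlg k Q) M]

/-- A representation `ρ` on a subspace `U` of a module `M` is a truncation of `M` if the vertices
act on `U` as they do on `M`, and so do the arrows whenever the result lies in `U`. The truncations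
to finite-dimensional `U` are the finite-dimensional approximations of `M`. -/
structure IsTruncation (U : Submodule k M) (ρ : PathAlg k Q →ₐ[k] Module.End k U) : Prop where
  vertex_apply (v : Q.V) (u : U) : (ρ (p k Q v) u : M) = p k Q v • (u : M)
  arrow_apply (e : Q.A) (u : U) (hu : arrow k Q e • (u : M) ∈ U) :
    (ρ (arrow k Q e) u : M) = arrow k Q e • (u : M)

variable [IsScalarTower k (PathAlg k Q) M]

theorem eventually_truncation_apply (r : PathAlg k Q) (x : M) :
    ∀ᶠ s : Finset M in atTop, ∀ (U : Submodule k M) (ρ : PathAlg k Q →ₐ[k] Module.End k U),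
      (s : Set M) ⊆ U → IsTruncation U ρ → ∀ u : U, (u : M) = x → (ρ r u : M) = r • x := by
  induction r using induction generalizing x with
  | algebraMap c =>
    exact .of_forall fun s U ρ _ _ u hu ↦ by simp [Algebra.algebraMap_eq_smul_one, hu]
  | vertex v => exact .of_forall fun s U ρ _ hρ u hu ↦ by rw [hρ.vertex_apply, hu]
  | arrow e =>
    filter_upwards [eventually_ge_atTop {arrow k Q e • x}] with s hs U ρ hsU hρ u hu
    rw [hρ.arrow_apply e u (hu ▸ hsU (hs (Finset.mem_singleton_self _))), hu]
  | mul a b iha ihb =>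
    filter_upwards [iha (b • x), ihb x] with s ha hb U ρ hsU hρ u hu
    rw [map_mul, Module.End.mul_apply, mul_smul, ha U ρ hsU hρ _ (hb U ρ hsU hρ u hu)]
  | add a b iha ihb =>
    filter_upwards [iha x, ihb x] with s ha hb U ρ hsU hρ u hu
    rw [map_add, LinearMap.add_apply, Submodule.coe_add, ha U ρ hsU hρ u hu, hb U ρ hsU hρ u hu,
      add_smul]

theorem eventually_truncation_sum_smul {ι : Type*} [Fintype ι] (m : ι → M)
    (r : ι → PathAlg k Q) :
    ∀ᶠ s : Finset M in atTop, ∀ (U : Submodule k M) (ρ : PathAlg k Q →ₐ[k] Module.End k U),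
      (s : Set M) ⊆ U → IsTruncation U ρ → ∀ hm : ∀ i, m i ∈ U,
        ((AsModule.of ρ).symm (∑ i, r i • AsModule.of ρ ⟨m i, hm i⟩) : M) = ∑ i, r i • m i := by
  filter_upwards [eventually_all.mpr fun i ↦ eventually_truncation_apply (r i) (m i)]
    with s hs U ρ hsU hρ hm
  rw [map_sum, Submodule.coe_sum]
  exact Finset.sum_congr rfl fun i _ ↦ hs i U ρ hsU hρ ⟨m i, hm i⟩ rfl

end Truncations

section FiniteDimensionalQuotients

variable {k : Type} [Field k] {Q : FinQuiver} {M : Type*} [AddCommGroup M] [Module k M]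
  [Module (PathAlg k Q) M] [IsScalarTower k (PathAlg k Q) M]

theorem exists_truncated_arrow (U : Submodule k M) (e : Q.A) :
    ∃ W : Module.End k U, ∀ u : U, arrow k Q e • (u : M) ∈ U →
      (W u : M) = arrow k Q e • (u : M) := by
  let a : U →ₗ[k] M := Algebra.lsmul k k M (arrow k Q e) ∘ₗ U.subtype
  obtain ⟨W, hW⟩ := (a.restrict fun _ hu ↦ hu : U.comap a →ₗ[k] U).exists_extend
  exact ⟨W, fun u hu ↦ congrArg Subtype.val (LinearMap.congr_fun hW ⟨u, hu⟩)⟩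

theorem exists_isTruncation {U : Submodule k M} (hU : ∀ v, ∀ u ∈ U, p k Q v • u ∈ U) :
    ∃ ρ : PathAlg k Q →ₐ[k] Module.End k U, IsTruncation U ρ := by
  let P (v : Q.V) : Module.End k U := (Algebra.lsmul k k M (p k Q v)).restrict (hU v)
  have hP (v u) : (P v u : M) = p k Q v • (u : M) := rfl
  have hPP (v) : P v * P v = P v := by
    ext u
    simp only [Module.End.mul_apply, hP, ← mul_smul, p_mul_self]
  choose W hW using exists_truncated_arrow (k := k) (Q := Q) U
  obtain ⟨ρ, hρp, hρe⟩ := exists_algHom (k := k) P (fun e ↦ P (Q.src e) * W e * P (Q.tgt e)) hPP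
    (fun v w h ↦ by
      ext u
      simp [hP, ← mul_smul, p_mul_ne k Q v w h])
    (by
      ext u
      simp [hP, sum_p_smul])
    (fun e ↦ by rw [← mul_assoc, ← mul_assoc, hPP])
    (fun e ↦ by rw [mul_assoc, hPP])
  refine ⟨ρ, fun v u ↦ by rw [hρp, hP], fun e u hu ↦ ?_⟩
  have htgt : arrow k Q e • (P (Q.tgt e) u : M) = arrow k Q e • (u : M) := by
    rw [hP, ← mul_smul, arrow_mul_tgt]
  rw [hρe, Module.End.mul_apply, Module.End.mul_apply, hP, hW e _ (htgt.symm ▸ hu), htgt,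
    ← mul_smul, src_mul_arrow]

theorem exists_finiteDimensional_vertex_stable (s : Finset M) :
    ∃ U : Submodule k M, (s : Set M) ⊆ U ∧ FiniteDimensional k U ∧
      ∀ v : Q.V, ∀ u ∈ U, p k Q v • u ∈ U := by
  let T : Set M := Set.image2 (fun v x ↦ p k Q v • x) Set.univ s
  have hT : T.Finite := Set.finite_univ.image2 _ s.finite_toSet
  have mem_T (v : Q.V) (x) (hx : x ∈ s) : p k Q v • x ∈ Submodule.span k T :=
    Submodule.subset_span (Set.mem_image2_of_mem (Set.mem_univ v) hx)
  refine ⟨Submodule.span k T, fun x hx ↦ ?_, .span_of_finite k hT, fun v u hu ↦ ?_⟩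
  · rw [← sum_p_smul (k := k) (Q := Q) x]
    exact Submodule.sum_mem _ fun v _ ↦ mem_T v x hx
  · suffices Submodule.span k T ≤
      (Submodule.span k T).comap (Algebra.lsmul k k M (p k Q v)) from this hu
    rw [Submodule.span_le]
    rintro _ ⟨w, -, x, hx, rfl⟩
    change p k Q v • p k Q w • x ∈ Submodule.span k T
    obtain rfl | hvw := eq_or_ne v w
    · rw [← mul_smul, p_mul_self]
      exact mem_T v x hx
    · rw [← mul_smul, p_mul_ne k Q v w hvw, zero_smul]
      exact zero_mem _

theorem exists_linearMap_truncation [Module.FinitePresentation (PathAlg k Q) M] (x : M) :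
    ∃ (U : Submodule k M) (ρ : PathAlg k Q →ₐ[k] Module.End k U)
      (g : M →ₗ[PathAlg k Q] AsModule ρ),
      FiniteDimensional k U ∧ ((AsModule.of ρ).symm (g x) : M) = x := by
  classical
  obtain ⟨n, m, hm⟩ := Module.Finite.exists_fin (R := PathAlg k Q) (M := M)
  let f := Fintype.linearCombination (PathAlg k Q) m
  have hf : Function.Surjective f := by
    rw [← LinearMap.range_eq_top, Fintype.range_linearCombination, hm]
  obtain ⟨G, hG⟩ := Module.FinitePresentation.fg_ker f hf
  obtain ⟨y, rfl⟩ := hf x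
  obtain ⟨s, hms, hs⟩ := ((eventually_ge_atTop (Finset.univ.image m)).and <|
    (insert y G).eventually_all.mpr fun z _ ↦
      eventually_truncation_sum_smul (k := k) (Q := Q) m z).exists
  obtain ⟨U, hsU, hU, hpU⟩ := exists_finiteDimensional_vertex_stable (k := k) (Q := Q) s
  obtain ⟨ρ, hρ⟩ := exists_isTruncation hpU
  have hmU (i) : m i ∈ U := hsU (hms (Finset.mem_image_of_mem m (Finset.mem_univ i)))
  let f' := Fintype.linearCombination (PathAlg k Q) fun i ↦ AsModule.of ρ ⟨m i, hmU i⟩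
  have hf' (z) (hz : z ∈ insert y G) : ((AsModule.of ρ).symm (f' z) : M) = f z :=
    hs z hz U ρ hsU hρ hmU
  have hker : LinearMap.ker f ≤ LinearMap.ker f' := by
    rw [← hG, Submodule.span_le]
    intro z hz
    have hfz : f z = 0 := LinearMap.mem_ker.mp (hG ▸ Submodule.subset_span hz)
    have hfz' := (hf' z (Finset.mem_insert_of_mem hz)).trans hfz
    simpa using hfz'
  refine ⟨U, ρ, (LinearMap.ker f).liftQ f' hker ∘ₗ (f.quotKerEquivOfSurjective hf).symm, hU, ?_⟩
  rw [LinearMap.comp_apply, LinearEquiv.coe_coe, LinearMap.quotKerEquivOfSurjective_symm_apply,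
    Submodule.liftQ_apply, hf' y (Finset.mem_insert_self y G)]

theorem exists_notMem_finiteDimensional_quotient [Module.FinitePresentation (PathAlg k Q) M]
    {x : M} (hx : x ≠ 0) :
    ∃ N : Submodule (PathAlg k Q) M, x ∉ N ∧ FiniteDimensional k (M ⧸ N) := by
  obtain ⟨U, ρ, g, hU, hgx⟩ := exists_linearMap_truncation (k := k) (Q := Q) x
  have : FiniteDimensional k (AsModule ρ) := .equiv (AsModule.of ρ)
  refine ⟨LinearMap.ker g, fun hxg ↦ hx ?_, ?_⟩
  · rw [← hgx, LinearMap.mem_ker.mp hxg, map_zero, Submodule.coe_zero]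
  · have hinj : Function.Injective ((LinearMap.ker g).liftQ g le_rfl) :=
      LinearMap.ker_eq_bot.mp (Submodule.ker_liftQ_eq_bot' _ g rfl)
    exact .of_injective (((LinearMap.ker g).liftQ g le_rfl).restrictScalars k) hinj

theorem finiteDimensional_of_isSimpleModule [Module.FinitePresentation (PathAlg k Q) M]
    [IsSimpleModule (PathAlg k Q) M] : FiniteDimensional k M := by
  have := IsSimpleModule.nontrivial (PathAlg k Q) M
  obtain ⟨x, hx⟩ := exists_ne (0 : M)
  obtain ⟨N, hxN, hN⟩ := exists_notMem_finiteDimensional_quotient (k := k) (Q := Q) hx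
  have hN_bot : N = ⊥ :=
    (eq_bot_or_eq_top N).resolve_right fun h ↦ hxN (h ▸ Submodule.mem_top)
  exact .equiv ((N.quotEquivOfEqBot hN_bot).restrictScalars k)

end FiniteDimensionalQuotients

theorem finiteDimensional_of_fpSimple {k : Type} [Field k] {Q : FinQuiver} {M : Type}
    [AddCommGroup M] [Module k M] [Module (PathAlg k Q) M] [IsScalarTower k (PathAlg k Q) M]
    [Module.FinitePresentation (PathAlg k Q) M] (hM : FpSimple (PathAlg k Q) M) :
    FiniteDimensional k M :=
  have := hM.isSimpleModule isLeftSemihereditary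
  finiteDimensional_of_isSimpleModule (Q := Q)

end PathAlg

section CompositionSeries

variable {k R M : Type*} [Ring R] [AddCommGroup M] [Module R M] {A B : Submodule R M}

theorem finitePresentation_quotient_comap_subtype (hAB : A ≤ B) [Module.Finite R A]
    [Module.FinitePresentation R B] : Module.FinitePresentation R (B ⧸ A.comap B.subtype) := by
  refine Module.finitePresentation_of_surjective _ (Submodule.mkQ_surjective _) ?_
  rw [Submodule.ker_mkQ, ← Module.Finite.iff_fg]
  exact .equiv (Submodule.comapSubtypeEquivOfLe hAB).symm

variable [CommRing k] [Algebra k R] [Module k M] [IsScalarTower k R M]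

theorem finite_of_finite_quotient_comap_subtype (hAB : A ≤ B) [Module.Finite k A]
    [Module.Finite k (B ⧸ A.comap B.subtype)] : Module.Finite k B := by
  have : Module.Finite k ((A.comap B.subtype).restrictScalars k) :=
    .equiv ((Submodule.comapSubtypeEquivOfLe hAB).symm.restrictScalars k)
  have : Module.Finite k (B ⧸ (A.comap B.subtype).restrictScalars k) :=
    ‹Module.Finite k (B ⧸ A.comap B.subtype)›
  exact .of_submodule_quotient ((A.comap B.subtype).restrictScalars k)

theorem finite_of_finite_factors {ℓ : ℕ} {c : Fin (ℓ + 1) → Submodule R M} (bot : c 0 = ⊥)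
    (top : c (Fin.last ℓ) = ⊤) (le_succ : ∀ i : Fin ℓ, c i.castSucc ≤ c i.succ)
    (factor : ∀ i : Fin ℓ,
      Module.Finite k (c i.succ ⧸ (c i.castSucc).comap (c i.succ).subtype)) :
    Module.Finite k M := by
  have hc (i) : Module.Finite k (c i) := by
    induction i using Fin.induction with
    | zero =>
      rw [bot]
      infer_instance
    | succ i _ =>
      have := factor i
      exact finite_of_finite_quotient_comap_subtype (le_succ i)
  have : Module.Finite k (⊤ : Submodule R M) := top ▸ hc (Fin.last ℓ)
  exact .equiv (Submodule.topEquiv.restrictScalars k : (⊤ : Submodule R M) ≃ₗ[k] M)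

end CompositionSeries

theorem PathAlg.finiteDimensional_of_isFpCompSeries {k : Type} [Field k] {Q : FinQuiver}
    {M : Type} [AddCommGroup M] [Module k M] [Module (PathAlg k Q) M]
    [IsScalarTower k (PathAlg k Q) M] {ℓ : ℕ} {c : Fin (ℓ + 1) → Submodule (PathAlg k Q) M}
    (hc : IsFpCompSeries ℓ c) : FiniteDimensional k M := by
  obtain ⟨bot, top, fp, step⟩ := hc
  refine finite_of_finite_factors bot top (fun i ↦ (step i).1.le) fun i ↦ ?_
  have := finitePresentation_quotient_comap_subtype (step i).1.le
  exact finiteDimensional_of_fpSimple (step i).2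

theorem exists_isFpCompSeries (k : Type*) {R M : Type} [Field k] [Ring R] [Algebra k R]
    [Algebra.FiniteType k R] [AddCommGroup M] [Module k M] [Module R M] [IsScalarTower k R M]
    [FiniteDimensional k M] :
    ∃ (ℓ : ℕ) (c : Fin (ℓ + 1) → Submodule R M), IsFpCompSeries ℓ c := by
  have : IsNoetherian R M := isNoetherian_of_tower k inferInstance
  have : IsArtinian R M := isArtinian_of_tower k inferInstance
  obtain ⟨s, bot, top⟩ := exists_compositionSeries_of_isNoetherian_isArtinian R M
  refine ⟨s.length, s, bot, top, fun i ↦ ?_, fun i ↦ ?_⟩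
  · have : FiniteDimensional k (s i) :=
      inferInstanceAs (FiniteDimensional k ((s i).restrictScalars k))
    exact finitePresentation_of_finite k R (s i)
  · have hcov : s i.castSucc ⋖ s i.succ := s.step i
    have := (covBy_iff_quot_is_simple hcov.le).mp hcov
    exact ⟨hcov.lt, fpSimple_of_isSimpleModule⟩

end LPA

open LPA in
/-- Let `R = P_k(Ē)`.  The category of finite-dimensional left `R`-modules
coincides with the category of finite-length objects of `fp(R)`:
(a) every finite-dimensional left `R`-module is finitely presented;
(b) every simple object of `fp(R)` is finite-dimensional over `k`;
(c) a finitely presented left `R`-module is finite-dimensional over `k` if and only if it has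
a composition series in `fp(R)`. -/
theorem statement_10 (k : Type) [Field k] (Q : FinQuiver) :
    (∀ (M : Type) [AddCommGroup M] [Module (PathAlg k Q.rev) M] [Module k M]
        [IsScalarTower k (PathAlg k Q.rev) M],
        FiniteDimensional k M → Module.FinitePresentation (PathAlg k Q.rev) M) ∧
    (∀ (M : Type) [AddCommGroup M] [Module (PathAlg k Q.rev) M] [Module k M]
        [IsScalarTower k (PathAlg k Q.rev) M],
        Module.FinitePresentation (PathAlg k Q.rev) M → FpSimple (PathAlg k Q.rev) M →
          FiniteDimensional k M) ∧
    (∀ (M : Type) [AddCommGroup M] [Module (PathAlg k Q.rev) M] [Module k M]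
        [IsScalarTower k (PathAlg k Q.rev) M],
        Module.FinitePresentation (PathAlg k Q.rev) M →
        (FiniteDimensional k M ↔
          ∃ (ℓ : ℕ) (c : Fin (ℓ + 1) → Submodule (PathAlg k Q.rev) M),
            IsFpCompSeries ℓ c)) := by
  refine ⟨fun M _ _ _ _ _ ↦ finitePresentation_of_finite k _ M, fun M _ _ _ _ _ hM ↦
    PathAlg.finiteDimensional_of_fpSimple hM, fun M _ _ _ _ _ ↦ ⟨fun _ ↦ ?_, ?_⟩⟩
  · exact exists_isFpCompSeries k
  · rintro ⟨ℓ, c, hc⟩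
    exact PathAlg.finiteDimensional_of_isFpCompSeries hc
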